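/- arXiv:2106.05149 — 2 statements merged into one kernel-verified Lean document; each statement's English description precedes it below -/
import Mathlib

section
/- Let X be a set and r : X×X → X×X be given by r(x,y) = (λ_x(y), τ_y(x)). Then (X,r) is a set-theoretic solution of the Yang–Baxter equation if and only if the following three identities hold for all x, y, z ∈ X: (i) τ_z∘τ_y = τ_{τ_z(y)}∘τ_{λ_y(z)} applied appropriately, i.e. τ_z(τ_y(x)) = τ_{τ_z(y)}(τ_{λ_y(z)}(x)); (ii) λ_{τ_{λ_y(z)}(x)}(τ_z(y)) = τ_{λ_{τ_y(x)}(z)}(λ_x(y)); (iii) λ_x(λ_y(z)) = λ_{λ_x(y)}(λ_{τ_y(x)}(z)). Moreover, if r is involutive (r² = id) and non-degenerate (all λ_x and τ_x bijective), then the validity of any one of the identities (i), (ii), (iii) for all x, y, z implies the other two, and hence implies that (X,r) is a solution of the YBE. -/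
/-- `r₁ = r × id` on `X³`. -/
def r1g {X : Type*} (r : X × X → X × X) : X × X × X → X × X × X :=
  fun t => ((r (t.1, t.2.1)).1, (r (t.1, t.2.1)).2, t.2.2)

/-- `r₂ = id × r` on `X³`. -/
def r2g {X : Type*} (r : X × X → X × X) : X × X × X → X × X × X :=
  fun t => (t.1, r t.2)

/-- The map `r(x,y) = (λ_x(y), τ_y(x))`. -/
def rOf {X : Type*} (lam tau : X → X → X) : X × X → X × X :=
  fun p => (lam p.1 p.2, tau p.2 p.1)

/-- Identity (i): `τ_z(τ_y(x)) = τ_{τ_z(y)}(τ_{λ_y(z)}(x))`. -/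
def condI {X : Type*} (lam tau : X → X → X) : Prop :=
  ∀ x y z : X, tau z (tau y x) = tau (tau z y) (tau (lam y z) x)

/-- Identity (ii): `λ_{τ_{λ_y(z)}(x)}(τ_z(y)) = τ_{λ_{τ_y(x)}(z)}(λ_x(y))`. -/
def condII {X : Type*} (lam tau : X → X → X) : Prop :=
  ∀ x y z : X, lam (tau (lam y z) x) (tau z y) = tau (lam (tau y x) z) (lam x y)

/-- Identity (iii): `λ_x(λ_y(z)) = λ_{λ_x(y)}(λ_{τ_y(x)}(z))`. -/
def condIII {X : Type*} (lam tau : X → X → X) : Prop :=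
  ∀ x y z : X, lam x (lam y z) = lam (lam x y) (lam (tau y x) z)

/-!
At `(x, y, z)`, identities (iii), (ii) and (i) equate the first, second and third components of the
two sides of the braid relation. For involutive `r`, the key is to use an identity twice, at
`(x, y, z)` and at `r₂ (x, y, z) = (x, λ_y(z), τ_z(y))`. For (iii) this shows that the two second
components have the same image under `λ_a`, where `a` is the common first component, so injectivity
of `λ_a` gives (ii). For (ii) it shows that the two first components have the same image under
`τ_b`, where `b` is the common second component, so injectivity of `τ_b` gives (iii). Conjugating
`r` by the swap of `X × X` exchanges `λ` with `τ` and (i) with (iii) and preserves (ii), whence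
(i) ↔ (ii).
-/

/-- The braid relation `r₁ r₂ r₁ = r₂ r₁ r₂`, that is, `r` is a set-theoretic solution of the
Yang–Baxter equation. -/
def IsYangBaxter {X : Type*} (r : X × X → X × X) : Prop :=
  r1g r ∘ r2g r ∘ r1g r = r2g r ∘ r1g r ∘ r2g r

section

open Function

variable {X : Type*} {lam tau : X → X → X}

theorem isYangBaxter_rOf_iff :
    IsYangBaxter (rOf lam tau) ↔ condI lam tau ∧ condII lam tau ∧ condIII lam tau := by
  simp only [IsYangBaxter, funext_iff, Prod.forall, r1g, r2g, rOf, comp_apply, Prod.mk.injEq,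
    forall_and]
  constructor
  · rintro ⟨hfst, hsnd, hthd⟩
    exact ⟨hthd, fun x y z => (hsnd x y z).symm, fun x y z => (hfst x y z).symm⟩
  · rintro ⟨hI, hII, hIII⟩
    exact ⟨fun x y z => (hIII x y z).symm, fun x y z => (hII x y z).symm, hI⟩

theorem condI_iff_condIII_swap : condI lam tau ↔ condIII tau lam :=
  ⟨fun h x y z => h z y x, fun h x y z => h z y x⟩

theorem condII.swap (h : condII lam tau) : condII tau lam :=
  fun x y z => (h z y x).symm

theorem involutive_rOf_swap (hr : Involutive (rOf lam tau)) : Involutive (rOf tau lam) :=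
  fun p => congrArg Prod.swap (hr p.swap)

theorem lam_lam_tau_of_involutive (hr : Involutive (rOf lam tau)) (x y : X) :
    lam (lam x y) (tau y x) = x :=
  congrArg Prod.fst (hr (x, y))

theorem tau_tau_lam_of_involutive (hr : Involutive (rOf lam tau)) (x y : X) :
    tau (tau y x) (lam x y) = y :=
  congrArg Prod.snd (hr (x, y))

theorem condII_of_condIII (hr : Involutive (rOf lam tau)) (hlam : ∀ x, Injective (lam x))
    (h : condIII lam tau) : condII lam tau := by
  have hlam_tau := lam_lam_tau_of_involutive hr
  intro x y z
  apply hlam (lam x (lam y z))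
  calc lam (lam x (lam y z)) (lam (tau (lam y z) x) (tau z y))
      = lam x (lam (lam y z) (tau z y)) := (h x (lam y z) (tau z y)).symm
    _ = lam x y := by rw [hlam_tau]
    _ = lam (lam (lam x y) (lam (tau y x) z)) (tau (lam (tau y x) z) (lam x y)) :=
        (hlam_tau _ _).symm
    _ = lam (lam x (lam y z)) (tau (lam (tau y x) z) (lam x y)) := by rw [← h x y z]

theorem condIII_of_condII (hr : Involutive (rOf lam tau)) (htau : ∀ x, Injective (tau x))
    (h : condII lam tau) : condIII lam tau := by
  have hlam_tau := lam_lam_tau_of_involutive hr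
  have htau_lam := tau_tau_lam_of_involutive hr
  intro x y z
  apply htau (lam (tau (lam y z) x) (tau z y))
  calc tau (lam (tau (lam y z) x) (tau z y)) (lam x (lam y z))
      = lam (tau (lam (lam y z) (tau z y)) x) (tau (tau z y) (lam y z)) :=
        (h x (lam y z) (tau z y)).symm
    _ = lam (tau y x) z := by rw [hlam_tau, htau_lam]
    _ = tau (tau (lam (tau y x) z) (lam x y)) (lam (lam x y) (lam (tau y x) z)) :=
        (htau_lam _ _).symm
    _ = tau (lam (tau (lam y z) x) (tau z y)) (lam (lam x y) (lam (tau y x) z)) := by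
        rw [← h x y z]

theorem condI_of_condII (hr : Involutive (rOf lam tau)) (hlam : ∀ x, Injective (lam x))
    (h : condII lam tau) : condI lam tau :=
  condI_iff_condIII_swap.2 (condIII_of_condII (involutive_rOf_swap hr) hlam h.swap)

theorem condII_of_condI (hr : Involutive (rOf lam tau)) (htau : ∀ x, Injective (tau x))
    (h : condI lam tau) : condII lam tau :=
  (condII_of_condIII (involutive_rOf_swap hr) htau (condI_iff_condIII_swap.1 h)).swap

end

theorem stmt_8_general {X : Type*} (lam tau : X → X → X) :
    (IsYangBaxter (rOf lam tau) ↔ condI lam tau ∧ condII lam tau ∧ condIII lam tau) ∧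
    (Function.Involutive (rOf lam tau) →
      (∀ x, Function.Injective (lam x)) → (∀ x, Function.Injective (tau x)) →
      (condI lam tau → condII lam tau ∧ condIII lam tau ∧ IsYangBaxter (rOf lam tau)) ∧
      (condII lam tau → condI lam tau ∧ condIII lam tau ∧ IsYangBaxter (rOf lam tau)) ∧
      (condIII lam tau → condI lam tau ∧ condII lam tau ∧ IsYangBaxter (rOf lam tau))) := by
  refine ⟨isYangBaxter_rOf_iff, fun hr hlam htau => ?_⟩
  have hI_II : condI lam tau → condII lam tau := condII_of_condI hr htau
  have hII_I : condII lam tau → condI lam tau := condI_of_condII hr hlam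
  have hII_III : condII lam tau → condIII lam tau := condIII_of_condII hr htau
  have hIII_II : condIII lam tau → condII lam tau := condII_of_condIII hr hlam
  rw [isYangBaxter_rOf_iff]
  tauto

/-- `(X,r)` with `r(x,y) = (λ_x(y), τ_y(x))` is a solution of the YBE iff
identities (i), (ii), (iii) hold; if moreover `r` is involutive and
non-degenerate, then any one of the three identities implies the other two
and hence that `(X,r)` is a solution of the YBE. -/
theorem stmt_8 {X : Type*} (lam tau : X → X → X) :
    ((r1g (rOf lam tau) ∘ r2g (rOf lam tau) ∘ r1g (rOf lam tau) =
        r2g (rOf lam tau) ∘ r1g (rOf lam tau) ∘ r2g (rOf lam tau)) ↔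
      (condI lam tau ∧ condII lam tau ∧ condIII lam tau)) ∧
    ((rOf lam tau ∘ rOf lam tau = id ∧
        (∀ x : X, Function.Bijective (lam x)) ∧
        (∀ x : X, Function.Bijective (tau x))) →
      ((condI lam tau →
          condII lam tau ∧ condIII lam tau ∧
          r1g (rOf lam tau) ∘ r2g (rOf lam tau) ∘ r1g (rOf lam tau) =
            r2g (rOf lam tau) ∘ r1g (rOf lam tau) ∘ r2g (rOf lam tau)) ∧
       (condII lam tau →
          condI lam tau ∧ condIII lam tau ∧
          r1g (rOf lam tau) ∘ r2g (rOf lam tau) ∘ r1g (rOf lam tau) =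
            r2g (rOf lam tau) ∘ r1g (rOf lam tau) ∘ r2g (rOf lam tau)) ∧
       (condIII lam tau →
          condI lam tau ∧ condII lam tau ∧
          r1g (rOf lam tau) ∘ r2g (rOf lam tau) ∘ r1g (rOf lam tau) =
            r2g (rOf lam tau) ∘ r1g (rOf lam tau) ∘ r2g (rOf lam tau)))) :=
  ⟨(stmt_8_general lam tau).1, fun ⟨hr, hlam, htau⟩ => (stmt_8_general lam tau).2 (congrFun hr)
    (fun x => (hlam x).injective) (fun x => (htau x).injective)⟩
end

section
/- Let X be a finite cycle set with |X| > 1 whose permutation group G(X) (the subgroup of Sym(X) generated by the left multiplications σ_x) is abelian and acts transitively on X (i.e., X is indecomposable). Then X is retractable: there exist distinct elements x, y ∈ X with σ_x = σ_y. -/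
/-!
Let `G` be the permutation group of the cycle set. For `g ∈ G` the twisted squaring map
`x ↦ σ (g x) x` is a permutation, by finiteness and transitivity, and the cycle set equation says
exactly that these maps commute with each other. They generate a second transitive abelian group
`T`, which `G` normalizes.

Fix a base point `o`. Both groups are regular, so `T` becomes a commutative radical ring whose
addition is the group law and whose product of `a` and `b` is the commutator `⁅g, b⁆`, where
`g ∈ G` satisfies `g • o = a • o`. A finite radical ring `R` has a nonzero annihilator: let
`z ≠ 0` have a minimal set of multiples `R z`. If some `w = r z` were nonzero, then `R w = R z`
would contain `-w = (-r) z`, but `s w = -w` forces `w = 0`. So some `z ≠ 1` in `T` commutes with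
all of `G`. If `z` moves `x`, then `σ (z x)` and `σ x` agree at `z x`, hence everywhere.
-/

open MulAction Subgroup
open scoped commutatorElement

section Transitive

variable {H X : Type*} [Group H] [MulAction H X]

theorem exists_mem_smul_eq (K : Subgroup H) [IsPretransitive K X] (x y : X) :
    ∃ k ∈ K, k • x = y :=
  let ⟨k, hk⟩ := exists_smul_eq K x y
  ⟨k, k.2, hk⟩

theorem eq_of_smul_eq_of_mem_centralizer [FaithfulSMul H X] {K : Subgroup H}
    [IsPretransitive K X] {a b : H} (ha : a ∈ centralizer (K : Set H))
    (hb : b ∈ centralizer (K : Set H)) {o : X} (h : a • o = b • o) : a = b := by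
  refine eq_of_smul_eq_smul fun x : X ↦ ?_
  obtain ⟨k, hk, rfl⟩ := exists_mem_smul_eq K o x
  rw [← mul_smul, ← mul_smul, ← mem_centralizer_iff.mp ha k hk, ← mem_centralizer_iff.mp hb k hk,
    mul_smul, mul_smul, h]

theorem eq_univ_of_forall_smul_mem [Finite H] {A : Set H} [IsPretransitive (closure A) X]
    {S : Set X} (hS : S.Nonempty) (hA : ∀ a ∈ A, ∀ x ∈ S, a • x ∈ S) : S = Set.univ := by
  obtain ⟨x, hx⟩ := hS
  refine Set.eq_univ_of_forall fun y ↦ ?_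
  obtain ⟨g, hg, rfl⟩ := exists_mem_smul_eq (closure A) x y
  rw [← mem_toSubmonoid, closure_toSubmonoid_of_finite] at hg
  induction hg using Submonoid.closure_induction_left with
  | one => rwa [one_smul]
  | mul_left a ha g _ ih => rw [mul_smul]; exact hA a ha _ ih

end Transitive

section Commutator

variable {H : Type*} [Group H] {T : Subgroup H} {g h a : H}

theorem commutatorElement_mem_of_mem_normalizer (hg : g ∈ normalizer (T : Set H)) (ha : a ∈ T) :
    ⁅g, a⁆ ∈ T :=
  T.mul_mem ((mem_normalizer_iff.mp hg a).mp ha) (T.inv_mem ha)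

theorem commutatorElement_inv_right_of_mem_normalizer [IsMulCommutative T]
    (hg : g ∈ normalizer (T : Set H)) (ha : a ∈ T) : ⁅g, a⁻¹⁆ = ⁅g, a⁆⁻¹ := by
  rw [commutatorElement_inv_right, ← commutatorElement_inv g a, mul_assoc,
    setLike_mul_comm (T.inv_mem (commutatorElement_mem_of_mem_normalizer hg ha)) ha,
    inv_mul_cancel_left]

theorem commutatorElement_left_comm [IsMulCommutative T] (hg : g ∈ normalizer (T : Set H))
    (hh : h ∈ normalizer (T : Set H)) (hgh : Commute g h) (ha : a ∈ T) :
    ⁅g, ⁅h, a⁆⁆ = ⁅h, ⁅g, a⁆⁆ := by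
  have expand (k l : H) : ⁅k, ⁅l, a⁆⁆ =
      k * l * a * (k * l)⁻¹ * ((k * a * k⁻¹)⁻¹ * a * (l * a * l⁻¹)⁻¹) := by
    simp only [commutatorElement_def]
    group
  have hga := T.inv_mem ((mem_normalizer_iff.mp hg a).mp ha)
  have hha := T.inv_mem ((mem_normalizer_iff.mp hh a).mp ha)
  rw [expand, expand, hgh.eq, setLike_mul_comm (T.mul_mem hga ha) hha, setLike_mul_comm hga ha,
    ← mul_assoc _ a]

end Commutator

section TwoRegularSubgroups

variable {H X : Type*} [Group H] [MulAction H X] [FaithfulSMul H X] {A T : Subgroup H}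
  [IsMulCommutative A] [IsMulCommutative T] [IsPretransitive T X]

-- Both sides are the product of `a` and `b` in the radical ring structure on `T` based at `o`.
theorem commutatorElement_eq_of_smul_eq (hAT : A ≤ normalizer (T : Set H)) {g h a b : H}
    (hg : g ∈ A) (hh : h ∈ A) (ha : a ∈ T) (hb : b ∈ T) {o : X} (hga : g • o = a • o)
    (hhb : h • o = b • o) : ⁅g, b⁆ = ⁅h, a⁆ := by
  have hgb : g * b * g⁻¹ ∈ T := (mem_normalizer_iff.mp (hAT hg) b).mp hb
  have hha : h * a * h⁻¹ ∈ T := (mem_normalizer_iff.mp (hAT hh) a).mp ha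
  have key : g * b * g⁻¹ * a = h * a * h⁻¹ * b := by
    refine eq_of_smul_eq_of_mem_centralizer (le_centralizer T (T.mul_mem hgb ha))
      (le_centralizer T (T.mul_mem hha hb)) (o := o) ?_
    simp only [mul_smul, ← hga, ← hhb, inv_smul_smul]
    rw [smul_smul, smul_smul, setLike_mul_comm hg hh]
  rw [commutatorElement_def, commutatorElement_def, mul_inv_eq_iff_eq_mul, mul_assoc _ a⁻¹,
    setLike_mul_comm (T.inv_mem ha) hb, ← mul_assoc, eq_mul_inv_iff_mul_eq, key]

variable (X) in
theorem exists_mem_ne_one_forall_commute [IsPretransitive A X] [Finite T] [Nontrivial X]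
    (hAT : A ≤ normalizer (T : Set H)) : ∃ z ∈ T, z ≠ 1 ∧ ∀ g ∈ A, Commute g z := by
  obtain ⟨o, x, hox⟩ := exists_pair_ne X
  obtain ⟨t, ht, rfl⟩ := exists_mem_smul_eq T o x
  let multiples (z : H) : Set H := (⁅·, z⁆) '' (A : Set H)
  obtain ⟨z, ⟨hz, hz1⟩, hmin⟩ := ((Set.toFinite (T : Set H)).sep (· ≠ 1)).exists_minimalFor
    multiples _ ⟨t, ht, fun h ↦ hox (by rw [h, one_smul])⟩
  refine ⟨z, hz, hz1, fun g hg ↦ commutatorElement_eq_one_iff_commute.mp ?_⟩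
  by_contra hw1
  obtain ⟨k, hk, hkz⟩ := exists_mem_smul_eq A o (z • o)
  obtain ⟨a, ha, hag⟩ := exists_mem_smul_eq T o (g • o)
  have hwka : ⁅g, z⁆ = ⁅k, a⁆ := commutatorElement_eq_of_smul_eq hAT hg hk ha hz hag.symm hkz
  have mem_multiples {b : H} (hb : b ∈ T) : ⁅k, b⁆ ∈ multiples z := by
    obtain ⟨h, hh, hhb⟩ := exists_mem_smul_eq A o (b • o)
    exact ⟨h, hh, commutatorElement_eq_of_smul_eq hAT hh hk hb hz hhb hkz⟩
  have hsub : multiples ⁅g, z⁆ ⊆ multiples z := by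
    rintro _ ⟨h, hh, rfl⟩
    simp only [hwka]
    rw [commutatorElement_left_comm (hAT hh) (hAT hk) (setLike_mul_comm hh hk) ha]
    exact mem_multiples (commutatorElement_mem_of_mem_normalizer (hAT hh) ha)
  have hinv : ⁅g, z⁆⁻¹ ∈ multiples z := by
    rw [hwka, ← commutatorElement_inv_right_of_mem_normalizer (hAT hk) ha]
    exact mem_multiples (T.inv_mem ha)
  have hw : ⁅g, z⁆ ∈ T := commutatorElement_mem_of_mem_normalizer (hAT hg) hz
  obtain ⟨h, -, hhw⟩ := hmin ⟨hw, hw1⟩ hsub hinv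
  -- For `w = ⁅g, z⁆` the equation `⁅h, w⁆ = w⁻¹` says `h * w * h⁻¹ = 1`.
  exact hw1 (conj_eq_one_iff.mp (mul_eq_right.mp hhw))

end TwoRegularSubgroups

section CycleSet

variable {X : Type*}

/-- The multiplication `x · y = σ x y` makes `X` a cycle set. Bijectivity of the left
multiplications is built into the type of `σ`. -/
def IsCycleSet (σ : X → Equiv.Perm X) : Prop :=
  ∀ x y z, σ (σ x y) (σ x z) = σ (σ y x) (σ y z)

/-- The permutation group `G(X)` of a cycle set. -/
def permGroup (σ : X → Equiv.Perm X) : Subgroup (Equiv.Perm X) :=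
  closure (Set.range σ)

/-- The map `x ↦ g x · x`, which is the squaring map `x ↦ x · x` twisted by `g`. -/
def twistedSquare (σ : X → Equiv.Perm X) (g : Equiv.Perm X) (x : X) : X :=
  σ (g x) x

/-- The second transitive abelian group of the proof, generated by those maps `x ↦ g x · x` with
`g ∈ G(X)` that are permutations; for a finite indecomposable `X` with abelian `G(X)` all of them
are. -/
def twistedSquareGroup (σ : X → Equiv.Perm X) : Subgroup (Equiv.Perm X) :=
  closure {p | ∃ g ∈ permGroup σ, ⇑p = twistedSquare σ g}

variable {σ : X → Equiv.Perm X} {g h : Equiv.Perm X}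

theorem apply_mem_permGroup (σ : X → Equiv.Perm X) (x : X) : σ x ∈ permGroup σ :=
  mem_closure_of_mem ⟨x, rfl⟩

theorem apply_eq_of_commute_twistedSquare [IsMulCommutative (permGroup σ)]
    [IsPretransitive (permGroup σ) X] {p z : Equiv.Perm X} (hp : ⇑p = twistedSquare σ 1)
    (hpz : Commute p z) {x : X} (hz : Commute (σ x) z) : σ (z x) = σ x := by
  refine eq_of_smul_eq_of_mem_centralizer (le_centralizer _ (apply_mem_permGroup σ _))
    (le_centralizer _ (apply_mem_permGroup σ _)) (o := z x) ?_
  calc σ (z x) (z x) = p (z x) := by rw [hp]; rfl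
    _ = z (p x) := DFunLike.congr_fun hpz.eq x
    _ = z (σ x x) := by rw [hp]; rfl
    _ = σ x (z x) := (DFunLike.congr_fun hz.eq x).symm

theorem eq_univ_of_forall_twistedSquare_mem [Finite X] [IsPretransitive (permGroup σ) X]
    {S : Set X} (hS : S.Nonempty)
    (hσS : ∀ g ∈ permGroup σ, ∀ x ∈ S, twistedSquare σ g x ∈ S) : S = Set.univ := by
  have : IsPretransitive (closure (Set.range σ)) X := ‹IsPretransitive (permGroup σ) X›
  refine eq_univ_of_forall_smul_mem (A := Set.range σ) hS ?_
  rintro _ ⟨x, rfl⟩ s hs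
  obtain ⟨g, hg, rfl⟩ := exists_mem_smul_eq (permGroup σ) s x
  exact hσS g hg s hs

section Abelian

variable [IsMulCommutative (permGroup σ)]

theorem apply_apply_comm (hg : g ∈ permGroup σ) (x y : X) : σ x (g y) = g (σ x y) :=
  DFunLike.congr_fun (setLike_mul_comm (apply_mem_permGroup σ x) hg) y

theorem permGroup_le_normalizer_twistedSquareGroup :
    permGroup σ ≤ normalizer (twistedSquareGroup σ : Set (Equiv.Perm X)) := by
  refine le_normalizer_closure_iff.mpr fun g hg p ⟨h, hh, hp⟩ ↦
    mem_closure_of_mem ⟨h * g⁻¹, mul_mem hh (inv_mem hg), funext fun x ↦ ?_⟩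
  simp only [Equiv.Perm.mul_apply, hp, twistedSquare, ← apply_apply_comm hg]
  rw [← Equiv.Perm.mul_apply g, mul_inv_cancel, Equiv.Perm.one_apply]

namespace IsCycleSet

theorem twistedSquare_comm (hσ : IsCycleSet σ) (hg : g ∈ permGroup σ) (hh : h ∈ permGroup σ)
    (x : X) :
    twistedSquare σ g (twistedSquare σ h x) = twistedSquare σ h (twistedSquare σ g x) := by
  simp only [twistedSquare]
  rw [← apply_apply_comm hg, ← apply_apply_comm hh, hσ]

theorem isMulCommutative_twistedSquareGroup (hσ : IsCycleSet σ) :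
    IsMulCommutative (twistedSquareGroup σ) := by
  refine isMulCommutative_closure ?_
  rintro p ⟨g, hg, hp⟩ q ⟨h, hh, hq⟩
  ext x
  simp only [Equiv.Perm.mul_apply, hp, hq, hσ.twistedSquare_comm hg hh]

variable [Finite X] [IsPretransitive (permGroup σ) X]

theorem bijective_twistedSquare (hσ : IsCycleSet σ) (hg : g ∈ permGroup σ) :
    Function.Bijective (twistedSquare σ g) := by
  refine Finite.surjective_iff_bijective.mp fun y ↦ ?_
  have hrange : Set.range (twistedSquare σ g) = Set.univ := by
    refine eq_univ_of_forall_twistedSquare_mem (σ := σ) ⟨_, y, rfl⟩ ?_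
    rintro h hh _ ⟨x, rfl⟩
    exact ⟨twistedSquare σ h x, hσ.twistedSquare_comm hg hh x⟩
  exact Set.range_eq_univ.mp hrange y

theorem exists_mem_twistedSquareGroup_eq (hσ : IsCycleSet σ) (hg : g ∈ permGroup σ) :
    ∃ p ∈ twistedSquareGroup σ, ⇑p = twistedSquare σ g :=
  ⟨.ofBijective _ (hσ.bijective_twistedSquare hg), mem_closure_of_mem ⟨g, hg, rfl⟩, rfl⟩

theorem isPretransitive_twistedSquareGroup (hσ : IsCycleSet σ) :
    IsPretransitive (twistedSquareGroup σ) X := by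
  have horbit (x : X) : orbit (twistedSquareGroup σ) x = Set.univ := by
    refine eq_univ_of_forall_twistedSquare_mem (σ := σ) (nonempty_orbit x) fun g hg y hy ↦ ?_
    obtain ⟨p, hp, hpg⟩ := hσ.exists_mem_twistedSquareGroup_eq hg
    rw [← hpg]
    exact mem_orbit_of_mem_orbit (⟨p, hp⟩ : twistedSquareGroup σ) hy
  exact ⟨fun x ↦ Set.eq_univ_iff_forall.mp (horbit x)⟩

end IsCycleSet

end Abelian

end CycleSet

/-- Let `X` be a finite cycle set with more than one element whose
permutation group `G(X)` (the subgroup of `Sym(X)` generated by the left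
multiplications `σ x`) is abelian and acts transitively on `X` (i.e. `X` is
indecomposable). Then `X` is retractable: there are distinct `x, y` with
`σ_x = σ_y`. -/
theorem stmt_19 {X : Type*} [Finite X] (σ : X → X ≃ X)
    (hcyc : ∀ x y z : X, σ (σ x y) (σ x z) = σ (σ y x) (σ y z))
    (hcard : 1 < Nat.card X)
    (habel : ∀ π ρ : Equiv.Perm X,
      π ∈ Subgroup.closure (Set.range fun x : X => (σ x : Equiv.Perm X)) →
      ρ ∈ Subgroup.closure (Set.range fun x : X => (σ x : Equiv.Perm X)) →
      π * ρ = ρ * π)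
    (htrans : ∀ x y : X,
      ∃ π ∈ Subgroup.closure (Set.range fun x : X => (σ x : Equiv.Perm X)),
        π x = y) :
    ∃ x y : X, x ≠ y ∧ σ x = σ y := by
  have hσ : IsCycleSet σ := hcyc
  have : Nontrivial X := Finite.one_lt_card_iff_nontrivial.mp hcard
  have : IsMulCommutative (permGroup σ) := .of_setLike_mul_comm fun π hπ ρ hρ ↦ habel π ρ hπ hρ
  have : IsPretransitive (permGroup σ) X :=
    ⟨fun x y ↦ let ⟨π, hπ, hxy⟩ := htrans x y; ⟨⟨π, hπ⟩, hxy⟩⟩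
  have := hσ.isMulCommutative_twistedSquareGroup
  have := hσ.isPretransitive_twistedSquareGroup
  obtain ⟨z, hz, hz1, hzG⟩ := exists_mem_ne_one_forall_commute X
    (permGroup_le_normalizer_twistedSquareGroup (σ := σ))
  obtain ⟨x, hx⟩ : ∃ x, z x ≠ x := not_forall.mp fun h ↦ hz1 (Equiv.ext h)
  obtain ⟨p, hp, hp1⟩ := hσ.exists_mem_twistedSquareGroup_eq (one_mem _)
  exact ⟨z x, x, hx, apply_eq_of_commute_twistedSquare hp1 (setLike_mul_comm hp hz)
    (hzG _ (apply_mem_permGroup σ x))⟩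
end
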